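/- Fusion (combinatorial) formula for the L-matrix: let k ≥ 1 and a, b, c, d ∈ ℤ with a − b = k − 2n and c − d = k − 2m for some 0 ≤ n, m ≤ k, with min(c,d) > k; assume r is irrational and u is such that every bracket appearing in a denominator is nonzero. Let a_0 = a, …, a_k = b be the canonical path from a to b. Then L^{(k)}(a,b;c,d|u) = Σ over all paths c_0 = c, c_1, …, c_k = d with |c_j − c_{j−1}| = 1 of ∏_{j=1}^{k} L^{(1)}(a_{j−1}, a_j; c_{j−1}, c_j | u+k−j), where L^{(1)}(a',b';c',d'|u') := Σ_{ε ∈ {±1}} ψ*_ε(u')^{d'}_{c'} ψ_ε(u')^{a'}_{b'} and L^{(k)}(a,b;c,d|u) := Σ_{μ ∈ {−k,−k+2,…,k}} ψ*^{(k)}_μ(u)^d_c ψ^{(k)}_μ(u)^a_b. -/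

import Mathlib

noncomputable section

open Complex Finset

namespace Ell

/-- `x^s = exp(-iπ s /(r τ))`. -/
def xp (τ : ℂ) (r : ℝ) (s : ℂ) : ℂ :=
  Complex.exp (-Complex.I * (Real.pi : ℂ) * s / ((r : ℂ) * τ))

/-- `Θ_p(z) = ∏_{j ≥ 0} (1 - z p^j)(1 - p^{j+1}/z)(1 - p^{j+1})`. -/
def Theta (p z : ℂ) : ℂ :=
  ∏' j : ℕ, ((1 - z * p ^ j) * (1 - p ^ (j + 1) / z) * (1 - p ^ (j + 1)))

/-- The bracket `[u] = x^{u²/r - u} Θ_p(x^{2u})` with `p = x^{2r}`. -/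
def br (τ : ℂ) (r : ℝ) (u : ℂ) : ℂ :=
  xp τ r (u ^ 2 / (r : ℂ) - u) * Theta (xp τ r (2 * (r : ℂ))) (xp τ r (2 * u))

/-- Elliptic shifted factorial `[u]_n = ∏_{j=0}^{n-1} [u+j]`. -/
def brF (τ : ℂ) (r : ℝ) (u : ℂ) (n : ℕ) : ℂ :=
  ∏ j ∈ Finset.range n, br τ r (u + (j : ℂ))

/-- Elliptic binomial coefficient `C_n^k(α,β,γ)`. -/
def Cnk (τ : ℂ) (r : ℝ) (k n : ℕ) (α β γ : ℂ) : ℂ :=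
  brF τ r 1 k / (brF τ r 1 n * brF τ r 1 (k - n)) *
    (brF τ r (α - γ) n * brF τ r (α + γ + (k : ℂ) - (n : ℂ)) n *
      brF τ r (α - β) (k - n) * brF τ r (α + β + (n : ℂ)) (k - n)) /
    (brF τ r (β - γ + (n : ℂ) - (k : ℂ)) n * brF τ r (γ - β - (n : ℂ)) (k - n) *
      brF τ r (β + γ) k)

/-- The elliptic 6j-symbol `R_n^m(α,β,γ,δ;k)`. -/
def Rnm (τ : ℂ) (r : ℝ) (k n m : ℕ) (α β γ δ : ℂ) : ℂ :=
  ∑ j ∈ Finset.range (min n m + 1),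
    Cnk τ r n j α γ (β + (k : ℂ) - (n : ℂ)) * Cnk τ r (k - j) (m - j) β (γ + (j : ℂ)) δ

/-- Terminating very-well-poised elliptic hypergeometric sum with explicit
truncation `N`:  `Σ_{j=0}^N ([u₀+2j]/[u₀]) ([u₀]_j/[1]_j) ∏ᵢ [uᵢ]_j/[u₀+1-uᵢ]_j`. -/
def Vsum (τ : ℂ) (r : ℝ) (u₀ : ℂ) (us : List ℂ) (N : ℕ) : ℂ :=
  ∑ j ∈ Finset.range (N + 1),
    br τ r (u₀ + 2 * (j : ℂ)) / br τ r u₀ * (brF τ r u₀ j / brF τ r 1 j) *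
      (us.map fun ui => brF τ r ui j / brF τ r (u₀ + 1 - ui) j).prod

/-- "Every bracket appearing in a denominator of `C_n^k(·,β,γ)` is nonzero". -/
def CdenomNZ (τ : ℂ) (r : ℝ) (k n : ℕ) (β γ : ℂ) : Prop :=
  brF τ r 1 n ≠ 0 ∧ brF τ r 1 (k - n) ≠ 0 ∧
    brF τ r (β - γ + (n : ℂ) - (k : ℂ)) n ≠ 0 ∧
    brF τ r (γ - β - (n : ℂ)) (k - n) ≠ 0 ∧ brF τ r (β + γ) k ≠ 0

/-- "Every bracket appearing in a denominator of `R_n^m(α,β,γ,δ;k)` is nonzero". -/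
def RdenomNZ (τ : ℂ) (r : ℝ) (k n m : ℕ) (β γ δ : ℂ) : Prop :=
  ∀ j ≤ min n m,
    CdenomNZ τ r n j γ (β + (k : ℂ) - (n : ℂ)) ∧
      CdenomNZ τ r (k - j) (m - j) (γ + (j : ℂ)) δ

/-- Jacobi theta `ϑ₁(v|σ)`. -/
def th1 (v σ : ℂ) : ℂ :=
  2 * Complex.exp (2 * (Real.pi : ℂ) * Complex.I * σ / 8) *
    (∏' n : ℕ, (1 - Complex.exp (2 * (Real.pi : ℂ) * Complex.I * σ) ^ (n + 1))) *
    Complex.sin ((Real.pi : ℂ) * v) *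
    ∏' n : ℕ,
      (1 - 2 * Complex.exp (2 * (Real.pi : ℂ) * Complex.I * σ) ^ (n + 1) *
            Complex.cos (2 * (Real.pi : ℂ) * v) +
        Complex.exp (2 * (Real.pi : ℂ) * Complex.I * σ) ^ (2 * (n + 1)))

/-- Jacobi theta `ϑ₀(v|σ)`. -/
def th0 (v σ : ℂ) : ℂ :=
  -Complex.I * Complex.exp ((Real.pi : ℂ) * Complex.I * (v + σ / 4)) * th1 (v + σ / 2) σ

/-- Jacobi theta `ϑ₂(v|σ)`. -/
def th2 (v σ : ℂ) : ℂ := th1 (v + 1 / 2) σ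

/-- Jacobi theta `ϑ₃(v|σ)`. -/
def th3 (v σ : ℂ) : ℂ :=
  Complex.exp ((Real.pi : ℂ) * Complex.I * (v + σ / 4)) * th1 (v + (σ + 1) / 2) σ

/-- Intertwining vector component `ψ_ε(u)^a_b`, `ε ∈ {1, -1}`. -/
def psi (τ : ℂ) (r : ℝ) (u : ℂ) (ε : ℤ) (a b : ℤ) : ℂ :=
  if ε = 1 then th0 ((((a : ℂ) - (b : ℂ)) * u + (a : ℂ)) / (2 * (r : ℂ))) (τ / 2)
  else th3 ((((a : ℂ) - (b : ℂ)) * u + (a : ℂ)) / (2 * (r : ℂ))) (τ / 2)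

/-- The constant `C = x^{-r/4} e^{-iπ/4} τ^{1/2}`. -/
def Cc (τ : ℂ) (r : ℝ) : ℂ :=
  xp τ r (-(r : ℂ) / 4) * Complex.exp (-(Real.pi : ℂ) * Complex.I / 4) * τ ^ (1 / 2 : ℂ)

/-- Dual intertwining vector component `ψ*_ε(u)^a_b = -ε(a-b) C² ψ_{-ε}(u-1)^a_b/(2[b][u])`. -/
def psiStar (τ : ℂ) (r : ℝ) (u : ℂ) (ε : ℤ) (a b : ℤ) : ℂ :=
  -(ε : ℂ) * ((a : ℂ) - (b : ℂ)) * Cc τ r ^ 2 * psi τ r (u - 1) (-ε) a b /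
    (2 * br τ r (b : ℂ) * br τ r u)

/-- Sign attached to a boolean. -/
def sg (b : Bool) : ℤ := if b then 1 else -1

/-- Canonical path from `a`: up for `j ≤ n`, down afterwards. -/
def cpathZ (a n : ℤ) (j : ℕ) : ℤ := if (j : ℤ) ≤ n then a + j else a + 2 * n - j

/-- Admissibility: `a - b ∈ {-k, -k+2, …, k}`. -/
def adm (k : ℕ) (a b : ℤ) : Prop := (a - b).natAbs ≤ k ∧ (a - b - (k : ℤ)) % 2 = 0

instance (k : ℕ) (a b : ℤ) : Decidable (adm k a b) := by unfold adm; infer_instance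

/-- Fused intertwining vector component `ψ^{(k)}_μ(u)^a_b` (zero if `a,b` not admissible). -/
def psiF (τ : ℂ) (r : ℝ) (k : ℕ) (μ : ℤ) (u : ℂ) (a b : ℤ) : ℂ :=
  if adm k a b then
    ∑ ε ∈ Finset.univ.filter fun ε : Fin k → Bool => (∑ j, sg (ε j)) = μ,
      ∏ j : Fin k,
        psi τ r (u + (k : ℂ) - (((j : ℕ) + 1 : ℕ) : ℂ)) (sg (ε j))
          (cpathZ a (((k : ℤ) - (a - b)) / 2) (j : ℕ))
          (cpathZ a (((k : ℤ) - (a - b)) / 2) ((j : ℕ) + 1))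
  else 0

/-- Partial-sum path attached to a sign sequence `δ`, starting at `a`. -/
def spath (k : ℕ) (a : ℤ) (δ : Fin k → Bool) (j : ℕ) : ℤ :=
  a + ∑ i ∈ Finset.range j, if h : i < k then sg (δ ⟨i, h⟩) else 0

/-- Fused dual intertwining vector component `ψ*^{(k)}_μ(u)^b_a`
(sum over all admissible paths from `a` to `b`; zero if not admissible). -/
def psiStarF (τ : ℂ) (r : ℝ) (k : ℕ) (μ : ℤ) (u : ℂ) (b a : ℤ) : ℂ :=
  if adm k a b then
    ∑ δ ∈ Finset.univ.filter fun δ : Fin k → Bool => (∑ j, sg (δ j)) = b - a,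
      ∏ j : Fin k,
        psiStar τ r (u + (k : ℂ) - (((j : ℕ) + 1 : ℕ) : ℂ))
          (if ((j : ℕ) + 1 : ℤ) ≤ ((k : ℤ) + μ) / 2 then 1 else -1)
          (spath k a δ ((j : ℕ) + 1)) (spath k a δ (j : ℕ))
  else 0

/-- The `L`-matrix `L^{(k)}(a,b;c,d|u) = Σ_μ ψ*^{(k)}_μ(u)^d_c ψ^{(k)}_μ(u)^a_b`. -/
def Lk (τ : ℂ) (r : ℝ) (k : ℕ) (u : ℂ) (a b c d : ℤ) : ℂ :=
  ∑ i ∈ Finset.range (k + 1),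
    psiStarF τ r k ((k : ℤ) - 2 * (i : ℤ)) u d c * psiF τ r k ((k : ℤ) - 2 * (i : ℤ)) u a b

/-- Normalized face weight `W̄(a,b;d,c|u)` (arguments ordered (NW, NE; SW, SE)). -/
def Wb (τ : ℂ) (r : ℝ) (u : ℂ) (a b d c : ℤ) : ℂ :=
  if b = a + 1 ∧ d = a + 1 ∧ c = a + 2 then 1
  else if b = a - 1 ∧ d = a - 1 ∧ c = a - 2 then 1
  else if b = a + 1 ∧ d = a + 1 ∧ c = a then
    br τ r ((a : ℂ) - u) * br τ r 1 / (br τ r (a : ℂ) * br τ r (1 + u))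
  else if b = a - 1 ∧ d = a - 1 ∧ c = a then
    br τ r ((a : ℂ) + u) * br τ r 1 / (br τ r (a : ℂ) * br τ r (1 + u))
  else if b = a + 1 ∧ d = a - 1 ∧ c = a then
    br τ r ((a : ℂ) + 1) * br τ r u / (br τ r (a : ℂ) * br τ r (1 + u))
  else if b = a - 1 ∧ d = a + 1 ∧ c = a then
    br τ r ((a : ℂ) - 1) * br τ r u / (br τ r (a : ℂ) * br τ r (1 + u))
  else 0

/-- Sequence with prescribed endpoints `d`, `c` and free interior values `f`. -/
def seqI (k : ℕ) (d c : ℤ) (f : Fin (k - 1) → ℤ) (j : ℕ) : ℤ :=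
  if h0 : j = 0 then d
  else if hj : j < k then f ⟨j - 1, by omega⟩ else c

/-- Fused face weight `W^{(k,1)}(a,b;d,c|u)`. -/
def Wk1 (τ : ℂ) (r : ℝ) (k : ℕ) (u : ℂ) (a b d c : ℤ) : ℂ :=
  if adm k a b then
    ∑' f : Fin (k - 1) → ℤ,
      ∏ j ∈ Finset.range k,
        Wb τ r (u + (k : ℂ) - ((j : ℂ) + 1))
          (cpathZ a (((k : ℤ) - (a - b)) / 2) j)
          (cpathZ a (((k : ℤ) - (a - b)) / 2) (j + 1))
          (seqI k d c f j) (seqI k d c f (j + 1))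
  else 0

/-- Fused face weight `W^{(k,l)}(a,b;d,c|u)`. -/
def Wkl (τ : ℂ) (r : ℝ) (k l : ℕ) (u : ℂ) (a b d c : ℤ) : ℂ :=
  if adm l b c then
    ∑' g : Fin (l - 1) → ℤ,
      ∏ i ∈ Finset.range l,
        Wk1 τ r k (u - (l : ℂ) + ((i : ℂ) + 1))
          (seqI l a d g i) (cpathZ b (((l : ℤ) - (b - c)) / 2) i)
          (seqI l a d g (i + 1)) (cpathZ b (((l : ℤ) - (b - c)) / 2) (i + 1))
  else 0

/-- Eight-vertex weight `ā(u)`. -/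
def aw (τ : ℂ) (r : ℝ) (u : ℂ) : ℂ :=
  th2 (1 / (2 * (r : ℂ))) (τ / 2) * th2 (u / (2 * (r : ℂ))) (τ / 2) /
    (th2 0 (τ / 2) * th2 ((1 + u) / (2 * (r : ℂ))) (τ / 2))

/-- Eight-vertex weight `b̄(u)`. -/
def bw (τ : ℂ) (r : ℝ) (u : ℂ) : ℂ :=
  th2 (1 / (2 * (r : ℂ))) (τ / 2) * th1 (u / (2 * (r : ℂ))) (τ / 2) /
    (th2 0 (τ / 2) * th1 ((1 + u) / (2 * (r : ℂ))) (τ / 2))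

/-- Eight-vertex weight `c̄(u)`. -/
def cw (τ : ℂ) (r : ℝ) (u : ℂ) : ℂ :=
  th1 (1 / (2 * (r : ℂ))) (τ / 2) * th2 (u / (2 * (r : ℂ))) (τ / 2) /
    (th2 0 (τ / 2) * th1 ((1 + u) / (2 * (r : ℂ))) (τ / 2))

/-- Eight-vertex weight `d̄(u)`. -/
def dw (τ : ℂ) (r : ℝ) (u : ℂ) : ℂ :=
  -(th1 (1 / (2 * (r : ℂ))) (τ / 2) * th1 (u / (2 * (r : ℂ))) (τ / 2)) /
    (th2 0 (τ / 2) * th2 ((1 + u) / (2 * (r : ℂ))) (τ / 2))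

/-- The normalized eight-vertex `R`-matrix entry `R̄(u)_{(ε₁,ε₂),(ε₁',ε₂')}`. -/
def Rbar (τ : ℂ) (r : ℝ) (u : ℂ) (e1 e2 e1' e2' : ℤ) : ℂ :=
  if e1' = e1 ∧ e2' = e2 ∧ e1 = e2 then aw τ r u
  else if e1' = e1 ∧ e2' = e2 ∧ e1 = -e2 then bw τ r u
  else if e1' = e2 ∧ e2' = e1 ∧ e1 = -e2 then cw τ r u
  else if e1' = -e1 ∧ e2' = -e2 ∧ e1 = e2 then dw τ r u
  else 0

/-- Sklyanin standard-basis vector `v_+(z)`. -/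
def vp (τ z : ℂ) : ℂ := th3 (2 * z) (2 * τ) - th2 (2 * z) (2 * τ)

/-- Sklyanin standard-basis vector `v_-(z)`. -/
def vm (τ z : ℂ) : ℂ := th3 (2 * z) (2 * τ) + th2 (2 * z) (2 * τ)

/-!
In a path sum of dual intertwining vectors the sign sequence only matters through its sum. Two
adjacent signs may be exchanged: on a straight piece of path the product of two dual vectors is
symmetric in the signs, and at a return `c → c ± 1 → c` the addition formula
`ϑ₀(x) ϑ₃(y) - ϑ₃(x) ϑ₀(y) = 2 ϑ₁(x + y | τ) ϑ₁(x - y | τ)` shows that the asymmetry of the upward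
excursion cancels that of the downward one. The addition formula compares the series of the theta
functions, which come from Jacobi's triple product; Jacobi's imaginary transformation identifies
the bracket `[u]` with a multiple of `ϑ₁(u / r | τ)`.

Hence every sign sequence with sum `μ` may serve in the definition of the fused dual vector, and
`L^{(k)}` becomes a sum over all sign sequences, which is the expanded product of the `L^{(1)}`.
-/

section QBinomial

variable {K : Type*} [Field K] {q : K}

/-- The `q`-Pochhammer symbol `(q; q)_n = ∏_{j=1}^n (1 - q^j)`. -/
def qPoch (q : K) (n : ℕ) : K := ∏ j ∈ range n, (1 - q ^ (j + 1))

/-- The reciprocal `1 / (q; q)_m` for `m : ℤ`, with the usual convention that it vanishes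
for `m < 0`; this makes the recursion `invQPoch_sub_one` hold at every integer. -/
def invQPoch (q : K) (m : ℤ) : K := if 0 ≤ m then (qPoch q m.toNat)⁻¹ else 0

/-- The Gaussian binomial coefficient `[2N choose N + n]_q`, zero for `|n| > N`. -/
def centralQBinom (q : K) (N : ℕ) (n : ℤ) : K :=
  qPoch q (2 * N) * invQPoch q (N + n) * invQPoch q (N - n)

lemma qPoch_succ (q : K) (n : ℕ) : qPoch q (n + 1) = qPoch q n * (1 - q ^ (n + 1)) :=
  prod_range_succ _ _

lemma invQPoch_sub_one (hq : ∀ n : ℕ, q ^ (n + 1) ≠ 1) (m : ℤ) :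
    invQPoch q (m - 1) = (1 - q ^ m) * invQPoch q m := by
  rcases lt_trichotomy m 0 with hneg | rfl | hpos
  · simp [invQPoch, show ¬ 1 ≤ m by lia, hneg.not_ge]
  · simp [invQPoch]
  · obtain ⟨n, rfl⟩ : ∃ n : ℕ, m = n + 1 := ⟨(m - 1).toNat, by lia⟩
    have hfactor : 1 - q ^ (n + 1) ≠ 0 := sub_ne_zero.2 (hq n).symm
    have hpow : q ^ ((n : ℤ) + 1) = q ^ (n + 1) := mod_cast zpow_natCast q (n + 1)
    have htoNat : ((n : ℤ) + 1).toNat = n + 1 := by lia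
    simp only [invQPoch, add_sub_cancel_right, Int.natCast_nonneg, if_true, Int.toNat_natCast,
      show (0 : ℤ) ≤ n + 1 by lia, htoNat, qPoch_succ, hpow, mul_inv]
    field_simp

lemma centralQBinom_zero_zero (q : K) : centralQBinom q 0 0 = 1 := by
  simp [centralQBinom, invQPoch, qPoch]

lemma centralQBinom_eq_zero {N : ℕ} {n : ℤ} (h : (N : ℤ) < |n|) : centralQBinom q N n = 0 := by
  rcases lt_abs.1 h with h | h
  · simp [centralQBinom, invQPoch, show ¬ n ≤ N by lia]
  · simp [centralQBinom, invQPoch, show ¬ (0 : ℤ) ≤ N + n by lia]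

lemma centralQBinom_succ (hq₀ : q ≠ 0) (hq : ∀ n : ℕ, q ^ (n + 1) ≠ 1) (N : ℕ) (n : ℤ) :
    centralQBinom q (N + 1) n = (1 + q ^ (2 * N + 1)) * centralQBinom q N n
      + q ^ ((N : ℤ) + 1 - n) * centralQBinom q N (n - 1)
      + q ^ ((N : ℤ) + 1 + n) * centralQBinom q N (n + 1) := by
  have hstep (m : ℤ) : invQPoch q m = (1 - q ^ (m + 1)) * invQPoch q (m + 1) := by
    rw [← invQPoch_sub_one hq, add_sub_cancel_right]
  have hplus := hstep (N + n)
  have hminus := hstep (N - n)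
  have hplus' : invQPoch q (N + (n - 1)) = (1 - q ^ (N + n)) * invQPoch q (N + n) := by
    rw [← invQPoch_sub_one hq]; congr 1; ring
  have hminus' : invQPoch q (N - (n + 1)) = (1 - q ^ (N - n)) * invQPoch q (N - n) := by
    rw [← invQPoch_sub_one hq]; congr 1; ring
  have hpow : q ^ (2 * N + 1) = q * (q ^ (N + n) * q ^ (N - n)) := by
    rw [← zpow_add₀ hq₀, pow_succ', ← zpow_natCast]; congr 2; push_cast; ring
  simp only [centralQBinom, mul_add, mul_one, Nat.cast_add, Nat.cast_one]
  rw [show 2 * N + 2 = 2 * N + 1 + 1 by ring, qPoch_succ, qPoch_succ, pow_succ q (2 * N + 1), hpow,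
    show (N : ℤ) + 1 + n = N + n + 1 by ring, show (N : ℤ) + 1 - n = N - n + 1 by ring,
    show (N : ℤ) + (n + 1) = N + n + 1 by ring, show (N : ℤ) - (n - 1) = N - n + 1 by ring,
    hplus', hminus', hplus, hminus, zpow_add_one₀ hq₀, zpow_add_one₀ hq₀]
  ring

lemma centralQBinom_succ_mul {z : K} {t : ℤ → K} (hq₀ : q ≠ 0) (hq : ∀ n : ℕ, q ^ (n + 1) ≠ 1)
    (hz : z ≠ 0) (ht : ∀ n, t (n + 1) = -(z * q ^ n) * t n) (N : ℕ) (n : ℤ) :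
    centralQBinom q (N + 1) n * t n = (1 + q ^ (2 * N + 1)) * (centralQBinom q N n * t n)
      + -(z * q ^ N) * (centralQBinom q N (n - 1) * t (n - 1))
      + -(q ^ (N + 1) / z) * (centralQBinom q N (n + 1) * t (n + 1)) := by
  have hprev : t n = -(z * q ^ (n - 1)) * t (n - 1) := by simpa using ht (n - 1)
  have hpow : q ^ ((N : ℤ) + 1 - n) * q ^ (n - 1) = q ^ N := by
    rw [← zpow_add₀ hq₀, ← zpow_natCast]; congr 1; ring
  have hpow' : q ^ ((N : ℤ) + 1 + n) = q ^ (N + 1) / z * (z * q ^ n) := by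
    rw [zpow_add₀ hq₀, show q ^ ((N : ℤ) + 1) = q ^ (N + 1) by norm_cast]; field_simp
  rw [centralQBinom_succ hq₀ hq, ht n, hpow']
  linear_combination q ^ ((N : ℤ) + 1 - n) * centralQBinom q N (n - 1) * hprev
    - z * centralQBinom q N (n - 1) * t (n - 1) * hpow

/-- The finite Jacobi triple product. The sequence `t n` is `(-1)^n q^(n(n-1)/2) z^n`, given
through its recursion to avoid the division by two in the exponent. -/
lemma hasSum_centralQBinom_mul [TopologicalSpace K] [IsTopologicalRing K] {z : K} {t : ℤ → K}
    (hq₀ : q ≠ 0) (hq : ∀ n : ℕ, q ^ (n + 1) ≠ 1) (hz : z ≠ 0) (ht₀ : t 0 = 1)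
    (ht : ∀ n, t (n + 1) = -(z * q ^ n) * t n) (N : ℕ) :
    HasSum (fun n : ℤ ↦ centralQBinom q N n * t n)
      (∏ j ∈ range N, ((1 - z * q ^ j) * (1 - q ^ (j + 1) / z))) := by
  induction N with
  | zero =>
    have hsupp (n : ℤ) (hn : n ≠ 0) : centralQBinom q 0 n * t n = 0 := by
      rw [centralQBinom_eq_zero (by simpa using hn), zero_mul]
    simpa [centralQBinom_zero_zero, ht₀] using hasSum_single 0 hsupp
  | succ N ih =>
    have hright := (Equiv.subRight (1 : ℤ)).hasSum_iff.2 ih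
    have hleft := (Equiv.addRight (1 : ℤ)).hasSum_iff.2 ih
    have hsum := ((ih.mul_left (1 + q ^ (2 * N + 1))).add (hright.mul_left (-(z * q ^ N)))).add
      (hleft.mul_left (-(q ^ (N + 1) / z)))
    have hfactor : (1 - z * q ^ N) * (1 - q ^ (N + 1) / z)
        = 1 + q ^ (2 * N + 1) + -(z * q ^ N) + -(q ^ (N + 1) / z) := by
      field_simp; ring
    rw [prod_range_succ, hfactor, mul_comm, add_mul, add_mul]
    simp only [centralQBinom_succ_mul hq₀ hq hz ht]
    exact hsum

end QBinomial

section TripleProduct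

open Filter Topology

variable {q : ℂ}

lemma pow_succ_ne_one_of_norm_lt_one (hq : ‖q‖ < 1) (n : ℕ) : q ^ (n + 1) ≠ 1 := by
  intro h
  have hlt : ‖q ^ (n + 1)‖ < 1 := norm_pow q _ ▸ pow_lt_one₀ (norm_nonneg _) hq n.succ_ne_zero
  simp [h] at hlt

lemma tprod_one_sub_pow_ne_zero (hq : ‖q‖ < 1) : ∏' j : ℕ, (1 - q ^ (j + 1)) ≠ 0 := by
  have hsummable : Summable fun j : ℕ ↦ ‖-q ^ (j + 1)‖ := by
    simpa using (summable_nat_add_iff 1).2 (summable_geometric_of_lt_one (norm_nonneg _) hq)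
  simpa [sub_eq_add_neg] using tprod_one_add_ne_zero_of_summable (f := fun j : ℕ ↦ -q ^ (j + 1))
    (fun j h ↦ pow_succ_ne_one_of_norm_lt_one hq j (by linear_combination -h)) hsummable

lemma tendsto_qPoch (hq : ‖q‖ < 1) :
    Tendsto (qPoch q) atTop (𝓝 (∏' j : ℕ, (1 - q ^ (j + 1)))) :=
  (ModularForm.multipliable_one_sub_pow hq).hasProd.tendsto_prod_nat

lemma tendsto_invQPoch (hq : ‖q‖ < 1) :
    Tendsto (invQPoch q) atTop (𝓝 (∏' j : ℕ, (1 - q ^ (j + 1)))⁻¹) := by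
  have htoNat : Tendsto Int.toNat atTop atTop :=
    tendsto_atTop_atTop.2 fun b ↦ ⟨b, fun m hm ↦ by lia⟩
  refine (((tendsto_qPoch hq).inv₀ (tprod_one_sub_pow_ne_zero hq)).comp htoNat).congr' ?_
  filter_upwards [eventually_ge_atTop 0] with m hm
  simp [invQPoch, hm]

lemma tendsto_centralQBinom (hq : ‖q‖ < 1) (n : ℤ) :
    Tendsto (fun N : ℕ ↦ centralQBinom q N n) atTop (𝓝 (∏' j : ℕ, (1 - q ^ (j + 1)))⁻¹) := by
  have hdouble : Tendsto (fun N : ℕ ↦ 2 * N) atTop atTop :=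
    tendsto_id.const_mul_atTop' two_pos
  have hadd : Tendsto (fun N : ℕ ↦ (N : ℤ) + n) atTop atTop :=
    tendsto_atTop_add_const_right _ n tendsto_natCast_atTop_atTop
  have hsub : Tendsto (fun N : ℕ ↦ (N : ℤ) - n) atTop atTop :=
    tendsto_atTop_add_const_right _ (-n) tendsto_natCast_atTop_atTop
  have hlim := (((tendsto_qPoch hq).comp hdouble).mul ((tendsto_invQPoch hq).comp hadd)).mul
    ((tendsto_invQPoch hq).comp hsub)
  rwa [mul_inv_cancel₀ (tprod_one_sub_pow_ne_zero hq), one_mul] at hlim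

lemma exists_norm_invQPoch_le (hq : ‖q‖ < 1) : ∃ M, ∀ m, ‖invQPoch q m‖ ≤ M := by
  obtain ⟨M, hM⟩ :=
    ((tendsto_qPoch hq).inv₀ (tprod_one_sub_pow_ne_zero hq)).norm.bddAbove_range
  have hbound (n : ℕ) : ‖(qPoch q n)⁻¹‖ ≤ M := hM ⟨n, rfl⟩
  refine ⟨M, fun m ↦ ?_⟩
  rw [invQPoch]
  split_ifs
  · exact hbound _
  · exact norm_zero.trans_le ((norm_nonneg _).trans (hbound 0))

lemma exists_norm_centralQBinom_le (hq : ‖q‖ < 1) : ∃ M, ∀ N n, ‖centralQBinom q N n‖ ≤ M := by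
  obtain ⟨M, hM⟩ := (tendsto_qPoch hq).norm.bddAbove_range
  obtain ⟨M', hM'⟩ := exists_norm_invQPoch_le hq
  have hbound (n : ℕ) : ‖qPoch q n‖ ≤ M := hM ⟨n, rfl⟩
  have hM₀ : 0 ≤ M := (norm_nonneg _).trans (hbound 0)
  have hM'₀ : 0 ≤ M' := (norm_nonneg _).trans (hM' 0)
  refine ⟨M * M' * M', fun N n ↦ ?_⟩
  rw [centralQBinom, norm_mul, norm_mul]
  gcongr
  exacts [hbound _, hM' _, hM' _]

lemma jacobiTheta₂_term_add_one (n : ℤ) (v σ : ℂ) :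
    jacobiTheta₂_term (n + 1) (v + 1 / 2 - σ / 2) σ
      = -(cexp (2 * Real.pi * I * v) * cexp (2 * Real.pi * I * σ) ^ n)
        * jacobiTheta₂_term n (v + 1 / 2 - σ / 2) σ := by
  rw [neg_eq_neg_one_mul, ← exp_pi_mul_I, ← exp_int_mul, jacobiTheta₂_term, jacobiTheta₂_term,
    ← exp_add, ← exp_add, ← exp_add]
  congr 1
  push_cast
  ring

lemma tendsto_prod_jacobiTheta₂ {σ : ℂ} (hσ : 0 < σ.im) (v : ℂ) :
    Tendsto (fun N ↦ ∏ j ∈ range N,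
        ((1 - cexp (2 * Real.pi * I * v) * cexp (2 * Real.pi * I * σ) ^ j)
          * (1 - cexp (2 * Real.pi * I * σ) ^ (j + 1) / cexp (2 * Real.pi * I * v)))) atTop
      (𝓝 ((∏' j : ℕ, (1 - cexp (2 * Real.pi * I * σ) ^ (j + 1)))⁻¹
        * jacobiTheta₂ (v + 1 / 2 - σ / 2) σ)) := by
  have hq : ‖cexp (2 * Real.pi * I * σ)‖ < 1 := UpperHalfPlane.norm_exp_two_pi_I_lt_one ⟨σ, hσ⟩
  obtain ⟨M, hM⟩ := exists_norm_centralQBinom_le hq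
  have hsummable : Summable (jacobiTheta₂_term · (v + 1 / 2 - σ / 2) σ) :=
    (summable_jacobiTheta₂_term_iff _ _).2 hσ
  have hfinite (N : ℕ) := (hasSum_centralQBinom_mul (exp_ne_zero _)
    (pow_succ_ne_one_of_norm_lt_one hq) (exp_ne_zero (2 * Real.pi * I * v))
    (t := (jacobiTheta₂_term · (v + 1 / 2 - σ / 2) σ)) (by simp [jacobiTheta₂_term])
    (jacobiTheta₂_term_add_one · v σ) N).tsum_eq
  simp_rw [← hfinite, jacobiTheta₂, ← tsum_mul_left]
  refine tendsto_tsum_of_dominated_convergence (hsummable.norm.mul_left M)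
    (fun n ↦ (tendsto_centralQBinom hq n).mul_const _) (.of_forall fun N n ↦ ?_)
  rw [norm_mul]
  gcongr
  exact hM N n

lemma multipliable_one_sub_mul_pow (hq : ‖q‖ < 1) (y : ℂ) :
    Multipliable fun n : ℕ ↦ 1 - y * q ^ n := by
  simpa [sub_eq_add_neg] using multipliable_one_add_of_summable (f := fun n : ℕ ↦ -(y * q ^ n))
    (by simpa using (summable_geometric_of_lt_one (norm_nonneg _) hq).mul_left ‖y‖)

lemma multipliable_one_sub_pow_succ_div (hq : ‖q‖ < 1) (z : ℂ) :
    Multipliable fun n : ℕ ↦ 1 - q ^ (n + 1) / z := by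
  refine (multipliable_one_sub_mul_pow hq (q / z)).congr fun n ↦ ?_
  ring

theorem Theta_eq_jacobiTheta₂ {σ : ℂ} (hσ : 0 < σ.im) (v : ℂ) :
    Theta (cexp (2 * Real.pi * I * σ)) (cexp (2 * Real.pi * I * v))
      = jacobiTheta₂ (v + 1 / 2 - σ / 2) σ := by
  have hq : ‖cexp (2 * Real.pi * I * σ)‖ < 1 := UpperHalfPlane.norm_exp_two_pi_I_lt_one ⟨σ, hσ⟩
  have hmult := (multipliable_one_sub_mul_pow hq (cexp (2 * Real.pi * I * v))).mul
    (multipliable_one_sub_pow_succ_div hq (cexp (2 * Real.pi * I * v)))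
  rw [Theta, hmult.tprod_mul (ModularForm.multipliable_one_sub_pow hq),
    tendsto_nhds_unique hmult.hasProd.tendsto_prod_nat (tendsto_prod_jacobiTheta₂ hσ v), mul_comm,
    mul_inv_cancel_left₀ (tprod_one_sub_pow_ne_zero hq)]

end TripleProduct

section ThetaFunctions

variable {σ : ℂ}

lemma sin_pi_mul_eq (v : ℂ) :
    sin (Real.pi * v)
      = I / 2 * cexp (-(Real.pi * I * v)) * (1 - cexp (2 * Real.pi * I * v)) := by
  have hsq : cexp (-(Real.pi * I * v)) * cexp (2 * Real.pi * I * v) = cexp (Real.pi * I * v) := by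
    rw [← exp_add]; congr 1; ring
  rw [sin, show -(Real.pi * v : ℂ) * I = -(Real.pi * I * v) by ring,
    show (Real.pi * v : ℂ) * I = Real.pi * I * v by ring]
  linear_combination I / 2 * hsq

lemma one_sub_two_mul_cos_add_sq (x v : ℂ) :
    1 - 2 * x * cos (2 * Real.pi * v) + x ^ 2
      = (1 - cexp (2 * Real.pi * I * v) * x) * (1 - x / cexp (2 * Real.pi * I * v)) := by
  have hcos : 2 * cos (2 * Real.pi * v)
      = cexp (2 * Real.pi * I * v) + (cexp (2 * Real.pi * I * v))⁻¹ := by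
    rw [two_cos, ← exp_neg]; congr 2 <;> ring
  have hz := exp_ne_zero (2 * Real.pi * I * v)
  rw [mul_right_comm, hcos]
  field_simp
  ring

lemma Theta_eq_one_sub_mul {q : ℂ} (hq : ‖q‖ < 1) (z : ℂ) :
    Theta q z = (∏' n : ℕ, (1 - q ^ (n + 1))) * (1 - z)
      * ∏' n : ℕ, ((1 - z * q ^ (n + 1)) * (1 - q ^ (n + 1) / z)) := by
  have hz : Multipliable fun n : ℕ ↦ 1 - z * q ^ n := multipliable_one_sub_mul_pow hq z
  have hz' : Multipliable fun n : ℕ ↦ 1 - z * q ^ (n + 1) :=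
    (multipliable_one_sub_mul_pow hq (z * q)).congr fun n ↦ by ring
  have hzinv : Multipliable fun n : ℕ ↦ 1 - q ^ (n + 1) / z :=
    multipliable_one_sub_pow_succ_div hq z
  have hsplit : ∏' n : ℕ, (1 - z * q ^ n) = (1 - z) * ∏' n : ℕ, (1 - z * q ^ (n + 1)) := by
    simpa using tprod_eq_zero_mul' (f := fun n : ℕ ↦ 1 - z * q ^ n) hz'
  rw [Theta, (hz.mul hzinv).tprod_mul (ModularForm.multipliable_one_sub_pow hq),
    hz.tprod_mul hzinv, hz'.tprod_mul hzinv, hsplit]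
  ring

lemma th1_eq_jacobiTheta₂ (hσ : 0 < σ.im) (v : ℂ) :
    th1 v σ = I * cexp (Real.pi * I * σ / 4) * cexp (-(Real.pi * I * v))
      * jacobiTheta₂ (v + 1 / 2 - σ / 2) σ := by
  have hq : ‖cexp (2 * Real.pi * I * σ)‖ < 1 := UpperHalfPlane.norm_exp_two_pi_I_lt_one ⟨σ, hσ⟩
  have hfactor (n : ℕ) := one_sub_two_mul_cos_add_sq (cexp (2 * Real.pi * I * σ) ^ (n + 1)) v
  simp only [← Theta_eq_jacobiTheta₂ hσ, Theta_eq_one_sub_mul hq, th1, sin_pi_mul_eq, pow_mul',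
    hfactor, show 2 * (Real.pi : ℂ) * I * σ / 8 = Real.pi * I * σ / 4 by ring]
  ring

lemma th0_eq_jacobiTheta₂ (hσ : 0 < σ.im) (v : ℂ) : th0 v σ = jacobiTheta₂ (v + 1 / 2) σ := by
  have hexp : cexp (Real.pi * I * (v + σ / 4))
      * (cexp (Real.pi * I * σ / 4) * cexp (-(Real.pi * I * (v + σ / 2)))) = 1 := by
    rw [← exp_add, ← exp_add, ← exp_zero]; congr 1; ring
  rw [th0, th1_eq_jacobiTheta₂ hσ, show v + σ / 2 + 1 / 2 - σ / 2 = v + 1 / 2 by ring]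
  linear_combination jacobiTheta₂ (v + 1 / 2) σ * (hexp - cexp (Real.pi * I * (v + σ / 4))
    * (cexp (Real.pi * I * σ / 4) * cexp (-(Real.pi * I * (v + σ / 2)))) * I_sq)

lemma th3_eq_jacobiTheta₂ (hσ : 0 < σ.im) (v : ℂ) : th3 v σ = jacobiTheta₂ v σ := by
  have hexp : cexp (Real.pi * I * (v + σ / 4))
      * (cexp (Real.pi * I * σ / 4) * cexp (-(Real.pi * I * (v + (σ + 1) / 2)))) = -I := by
    rw [← exp_add, ← exp_add, ← exp_neg_pi_div_two_mul_I]; congr 1; ring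
  rw [th3, th1_eq_jacobiTheta₂ hσ, show v + (σ + 1) / 2 + 1 / 2 - σ / 2 = v + 1 by ring,
    jacobiTheta₂_add_left]
  linear_combination jacobiTheta₂ v σ * (I * hexp - I_sq)

lemma th1_neg (v σ : ℂ) : th1 (-v) σ = -th1 v σ := by
  simp only [th1, mul_neg, sin_neg, cos_neg, neg_mul]

end ThetaFunctions

section Bracket

variable {τ : ℂ} {r : ℝ}

lemma neg_I_mul_cpow_half (hτ : 0 < τ.im) :
    (-I * τ) ^ (1 / 2 : ℂ) = cexp (-Real.pi * I / 4) * τ ^ (1 / 2 : ℂ) := by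
  have hτ₀ : τ ≠ 0 := by rintro rfl; simp at hτ
  have harg : arg (-I) + arg τ ∈ Set.Ioc (-Real.pi) Real.pi := by
    have hnonneg := arg_nonneg_iff.2 hτ.le
    have hle := arg_le_pi τ
    rw [arg_neg_I]
    constructor <;> linarith [Real.pi_pos]
  rw [cpow_def_of_ne_zero (mul_ne_zero (neg_ne_zero.2 I_ne_zero) hτ₀), cpow_def_of_ne_zero hτ₀,
    (log_mul_eq_add_log_iff (neg_ne_zero.2 I_ne_zero) hτ₀).2 harg, log_neg_I, ← exp_add]
  congr 1
  ring

/-- Jacobi's imaginary transformation: the bracket has nome `exp(-2πi/τ)`, whereas `ϑ₁(·|τ)`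
has nome `exp(2πiτ)`. -/
lemma br_eq_th1 (hτ : 0 < τ.im) (hr : r ≠ 0) (u : ℂ) : br τ r u = Cc τ r * th1 (u / r) τ := by
  have hτ₀ : τ ≠ 0 := by rintro rfl; simp at hτ
  have hr₀ : (r : ℂ) ≠ 0 := mod_cast hr
  have hσ : 0 < (-1 / τ).im := by
    rw [neg_div, neg_im, one_div, inv_im, neg_div, neg_neg]
    exact div_pos hτ (normSq_pos.2 hτ₀)
  have hnome : xp τ r (2 * r) = cexp (2 * Real.pi * I * (-1 / τ)) := by
    rw [xp]; congr 1; field_simp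
  have harg : xp τ r (2 * u) = cexp (2 * Real.pi * I * (-(u / (r * τ)))) := by
    rw [xp]; congr 1; field_simp
  have hreflect : jacobiTheta₂ (u / r + 1 / 2 - τ / 2) τ
      = jacobiTheta₂ (τ / 2 + 1 / 2 - u / r) τ := by
    rw [← jacobiTheta₂_neg_left, ← jacobiTheta₂_add_left]; congr 1; ring
  have hdiv : -(u / (r * τ)) + 1 / 2 - -1 / τ / 2 = (τ / 2 + 1 / 2 - u / r) / τ := by
    field_simp; ring
  have hexp : xp τ r (u ^ 2 / r - u) = xp τ r (-r / 4) * I * cexp (Real.pi * I * τ / 4)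
      * cexp (-(Real.pi * I * (u / r)))
      * cexp (-Real.pi * I * (τ / 2 + 1 / 2 - u / r) ^ 2 / τ) := by
    nth_rw 1 [← exp_pi_div_two_mul_I]
    rw [xp, xp, ← exp_add, ← exp_add, ← exp_add, ← exp_add]
    congr 1
    field_simp
    ring
  have hroot : τ ^ (1 / 2 : ℂ) ≠ 0 := by simp [cpow_eq_zero_iff, hτ₀]
  rw [br, hnome, harg, Theta_eq_jacobiTheta₂ hσ, th1_eq_jacobiTheta₂ hτ, hreflect,
    jacobiTheta₂_functional_equation _ τ, neg_I_mul_cpow_half hτ, hdiv, hexp, Cc]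
  field_simp

lemma br_neg (hτ : 0 < τ.im) (hr : r ≠ 0) (u : ℂ) : br τ r (-u) = -br τ r u := by
  rw [br_eq_th1 hτ hr, br_eq_th1 hτ hr, neg_div, th1_neg, mul_neg]

end Bracket

section AdditionFormula

variable {τ : ℂ} {r : ℝ}

lemma hasSum_mul_prod {ι κ : Type*} {f : ι → ℂ} {g : κ → ℂ} {s t : ℂ} (hf : HasSum f s)
    (hg : HasSum g t) : HasSum (fun p : ι × κ ↦ f p.1 * g p.2) (s * t) :=
  hf.mul hg (summable_mul_of_summable_norm hf.summable.norm hg.summable.norm)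

lemma hasSum_th3 {σ : ℂ} (hσ : 0 < σ.im) (v : ℂ) :
    HasSum (jacobiTheta₂_term · v σ) (th3 v σ) :=
  th3_eq_jacobiTheta₂ hσ v ▸ hasSum_jacobiTheta₂_term v hσ

lemma hasSum_th0 {σ : ℂ} (hσ : 0 < σ.im) (v : ℂ) :
    HasSum (fun n : ℤ ↦ (-1) ^ n * jacobiTheta₂_term n v σ) (th0 v σ) := by
  refine th0_eq_jacobiTheta₂ hσ v ▸ (hasSum_jacobiTheta₂_term (v + 1 / 2) hσ).congr_fun ?_
  intro n
  rw [jacobiTheta₂_term, jacobiTheta₂_term, ← exp_pi_mul_I, ← exp_int_mul, ← exp_add]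
  congr 1
  ring

lemma hasSum_th1 {σ : ℂ} (hσ : 0 < σ.im) (v : ℂ) :
    HasSum (fun n : ℤ ↦
      I * (-1) ^ n * cexp (Real.pi * I * ((2 * n - 1) * v + (n - 1 / 2) ^ 2 * σ))) (th1 v σ) := by
  refine th1_eq_jacobiTheta₂ hσ v ▸
    ((hasSum_jacobiTheta₂_term (v + 1 / 2 - σ / 2) hσ).mul_left _).congr_fun ?_
  intro n
  rw [jacobiTheta₂_term, ← exp_pi_mul_I, ← exp_int_mul, mul_assoc I, ← exp_add, mul_assoc I,
    mul_assoc I, ← exp_add, ← exp_add]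
  congr 2
  ring

lemma neg_one_zpow_sub_eq_zero_of_even_add {m n : ℤ} (h : Even (m + n)) :
    (-1 : ℂ) ^ m - (-1) ^ n = 0 := by
  simp only [neg_one_zpow_eq_ite, Int.even_add.1 h, sub_self]

lemma neg_one_zpow_add_sub_one_sub (i j : ℤ) :
    (-1 : ℂ) ^ (i + j - 1) - (-1) ^ (i - j) = -2 * (-1) ^ i * (-1) ^ j := by
  have hj : ((-1 : ℂ) ^ j)⁻¹ = (-1) ^ j := by rw [← inv_zpow]; norm_num
  rw [zpow_sub_one₀ (by norm_num), zpow_add₀ (by norm_num), zpow_sub₀ (by norm_num), div_eq_mul_inv,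
    hj]
  norm_num
  ring

lemma jacobiTheta₂_term_mul_jacobiTheta₂_term (i j : ℤ) (x y τ : ℂ) :
    jacobiTheta₂_term (i + j - 1) x (τ / 2) * jacobiTheta₂_term (i - j) y (τ / 2)
      = cexp (Real.pi * I * ((2 * i - 1) * (x + y) + (i - 1 / 2) ^ 2 * τ))
        * cexp (Real.pi * I * ((2 * j - 1) * (x - y) + (j - 1 / 2) ^ 2 * τ)) := by
  rw [jacobiTheta₂_term, jacobiTheta₂_term, ← exp_add, ← exp_add]
  congr 1
  push_cast
  ring

/-- Only index pairs with `m + n` odd survive in the difference of products; they are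
`m = i + j - 1`, `n = i - j`, and this substitution diagonalises the quadratic exponent. -/
theorem th0_mul_th3_sub (hτ : 0 < τ.im) (x y : ℂ) :
    th0 x (τ / 2) * th3 y (τ / 2) - th3 x (τ / 2) * th0 y (τ / 2)
      = 2 * (th1 (x + y) τ * th1 (x - y) τ) := by
  have hσ : 0 < (τ / 2).im := by simpa using hτ
  have hsub := (hasSum_mul_prod (hasSum_th0 hσ x) (hasSum_th3 hσ y)).sub
    (hasSum_mul_prod (hasSum_th3 hσ x) (hasSum_th0 hσ y))
  have hinj : Function.Injective fun p : ℤ × ℤ ↦ (p.1 + p.2 - 1, p.1 - p.2) := by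
    rintro ⟨i, j⟩ ⟨i', j'⟩ h
    simp only [Prod.mk.injEq] at h ⊢
    lia
  rw [← hinj.hasSum_iff] at hsub
  · refine hsub.unique
      (((hasSum_mul_prod (hasSum_th1 hτ (x + y)) (hasSum_th1 hτ (x - y))).mul_left 2).congr_fun ?_)
    rintro ⟨i, j⟩
    dsimp only [Function.comp_apply]
    linear_combination
      jacobiTheta₂_term (i + j - 1) x (τ / 2) * jacobiTheta₂_term (i - j) y (τ / 2)
          * neg_one_zpow_add_sub_one_sub i j
        + 2 * I ^ 2 * (-1) ^ i * (-1) ^ j * jacobiTheta₂_term_mul_jacobiTheta₂_term i j x y τ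
        - 2 * (-1) ^ i * (-1) ^ j * (jacobiTheta₂_term (i + j - 1) x (τ / 2)
          * jacobiTheta₂_term (i - j) y (τ / 2)) * I_sq
  · rintro ⟨m, n⟩ hmn
    have heven : Even (m + n) := by
      by_contra hodd
      obtain ⟨i, hi⟩ := Int.not_even_iff_odd.1 hodd
      exact hmn ⟨(i + 1, i + 1 - n), by ext <;> dsimp only <;> lia⟩
    linear_combination jacobiTheta₂_term m x (τ / 2) * jacobiTheta₂_term n y (τ / 2)
      * neg_one_zpow_sub_eq_zero_of_even_add heven

lemma Cc_sq_mul_th0_mul_th3_sub (hτ : 0 < τ.im) (hr : r ≠ 0) (s v : ℂ) :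
    Cc τ r ^ 2 * (th0 ((s + v) / (2 * r)) (τ / 2) * th3 ((s - v) / (2 * r)) (τ / 2)
        - th3 ((s + v) / (2 * r)) (τ / 2) * th0 ((s - v) / (2 * r)) (τ / 2))
      = 2 * (br τ r s * br τ r v) := by
  have hr₀ : (r : ℂ) ≠ 0 := mod_cast hr
  have hadd : (s + v) / (2 * r) + (s - v) / (2 * r) = s / r := by field_simp; ring
  have hsub : (s + v) / (2 * r) - (s - v) / (2 * r) = v / r := by field_simp; ring
  rw [th0_mul_th3_sub hτ, hadd, hsub, br_eq_th1 hτ hr, br_eq_th1 hτ hr]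
  ring

end AdditionFormula

section DualVectorExchange

variable {τ : ℂ} {r : ℝ}

lemma psiStar_mul_psiStar_straight (v : ℂ) (ε ε' s c : ℤ) :
    psiStar τ r (v + 1) ε (c + s) c * psiStar τ r v ε' (c + s + s) (c + s)
      = psiStar τ r (v + 1) ε' (c + s) c * psiStar τ r v ε (c + s + s) (c + s) := by
  have hpsi (η : ℤ) : psi τ r (v + 1 - 1) η (c + s) c = psi τ r (v - 1) η (c + s + s) (c + s) := by
    have harg : ((c + s : ℤ) - (c : ℂ)) * (v + 1 - 1) + (c + s : ℤ)
        = ((c + s + s : ℤ) - ((c + s : ℤ) : ℂ)) * (v - 1) + (c + s + s : ℤ) := by push_cast; ring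
    rw [psi, psi, harg]
  rw [psiStar, psiStar, psiStar, psiStar, hpsi, hpsi]
  push_cast
  ring

lemma psiStar_mul_psiStar_turn_sub (hτ : 0 < τ.im) (hr : r ≠ 0) (v : ℂ) {s c : ℤ}
    (hs : br τ r (c + s : ℤ) ≠ 0) :
    psiStar τ r (v + 1) 1 (c + s) c * psiStar τ r v (-1) c (c + s)
        - psiStar τ r (v + 1) (-1) (c + s) c * psiStar τ r v 1 c (c + s)
      = -(s ^ 2 * Cc τ r ^ 2 * br τ r (s * v) / (2 * br τ r c * br τ r (v + 1) * br τ r v)) := by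
  have hadd := Cc_sq_mul_th0_mul_th3_sub hτ hr (c + s : ℤ) (s * v)
  have hstep : ((c + s : ℤ) : ℂ) - c = s := by push_cast; ring
  have hstep' : (c : ℂ) - (c + s : ℤ) = -s := by push_cast; ring
  have hout : s * (v + 1 - 1) + (c + s : ℤ) = (c + s : ℤ) + s * v := by ring
  have hback : -s * (v - 1) + c = (c + s : ℤ) - s * v := by push_cast; ring
  have hcancel : br τ r (c + s : ℤ) * (br τ r (c + s : ℤ))⁻¹ = 1 := mul_inv_cancel₀ hs
  simp only [psiStar, psi, hstep, hstep', hout, hback, neg_neg, if_true,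
    show (-1 : ℤ) ≠ 1 by decide, if_false, Int.cast_one, Int.cast_neg]
  linear_combination (-(s : ℂ) ^ 2 * Cc τ r ^ 2 * 2⁻¹ * 2⁻¹ * (br τ r c)⁻¹ * (br τ r (v + 1))⁻¹
    * (br τ r (c + s : ℤ))⁻¹ * (br τ r v)⁻¹) * hadd
    - ((s : ℂ) ^ 2 * Cc τ r ^ 2 * 2⁻¹ * (br τ r c)⁻¹ * (br τ r (v + 1))⁻¹ * (br τ r v)⁻¹
      * br τ r (s * v)) * hcancel

/-- Each turn alone is not symmetric in the signs; its defect is proportional to `[± v]`, and the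
two defects cancel because the bracket is odd. -/
lemma psiStar_exchange_turn (hτ : 0 < τ.im) (hr : r ≠ 0) (v : ℂ) (e e' : Bool) {c : ℤ}
    (hup : br τ r (c + 1 : ℤ) ≠ 0) (hdown : br τ r (c - 1 : ℤ) ≠ 0) :
    psiStar τ r (v + 1) (sg e) (c + 1) c * psiStar τ r v (sg e') c (c + 1)
        + psiStar τ r (v + 1) (sg e) (c - 1) c * psiStar τ r v (sg e') c (c - 1)
      = psiStar τ r (v + 1) (sg e') (c + 1) c * psiStar τ r v (sg e) c (c + 1)
        + psiStar τ r (v + 1) (sg e') (c - 1) c * psiStar τ r v (sg e) c (c - 1) := by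
  rw [sub_eq_add_neg] at hdown ⊢
  have hu := psiStar_mul_psiStar_turn_sub hτ hr v hup
  have hd := psiStar_mul_psiStar_turn_sub hτ hr v hdown
  simp only [Int.cast_one, Int.cast_neg, one_mul, neg_mul, br_neg hτ hr v] at hu hd
  cases e <;> cases e' <;> simp only [sg, if_true, Bool.false_eq_true, if_false]
  · linear_combination -hu - hd
  · linear_combination hu + hd

end DualVectorExchange

section TransferOperators

variable {α R : Type*} [CommSemiring R]

/-- The one-step transfer operator on functions on `ℤ`, `w b a` being the weight of the step from
`a` to its neighbour `b`. -/
def transfer (w : ℤ → ℤ → R) (f : ℤ → R) (c : ℤ) : R :=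
  w (c + 1) c * f (c + 1) + w (c - 1) c * f (c - 1)

/-- The composition of the transfer operators labelled by a list, applied to `f`. The weight of a
step depends on its label and on the number of steps that remain after it. -/
def transferList (w : α → ℕ → ℤ → ℤ → R) (f : ℤ → R) : List α → ℤ → R
  | [] => f
  | e :: l => transfer (w e l.length) (transferList w f l)

lemma transferList_perm {w : α → ℕ → ℤ → ℤ → R} {P : ℤ → Prop}
    (hcomm : ∀ e e' n f c, P (c + 1) → P (c - 1) →
      transfer (w e (n + 1)) (transfer (w e' n) f) c
        = transfer (w e' (n + 1)) (transfer (w e n) f) c)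
    (f : ℤ → R) {l l' : List α} (h : l.Perm l') {c : ℤ} (hP : ∀ s, |s - c| < l.length → P s) :
    transferList w f l c = transferList w f l' c := by
  induction h generalizing c with
  | nil => rfl
  | cons e h ih =>
    have hnear (c' : ℤ) (hc' : |c' - c| ≤ 1) := ih (c := c') fun s hs ↦ hP s <| by
      rw [List.length_cons]; grind
    rw [transferList, transferList, transfer, transfer, h.length_eq, hnear (c + 1) (by simp),
      hnear (c - 1) (by simp)]
  | swap e e' l =>
    exact hcomm e' e l.length _ c (hP _ (by simp)) (hP _ (by simp))
  | trans h _ ih ih' => rw [ih hP, ih' fun s hs ↦ hP s (by rwa [h.length_eq])]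

lemma spath_zero (k : ℕ) (c : ℤ) (δ : Fin k → Bool) : spath k c δ 0 = c := by
  simp [spath]

lemma spath_cons_succ (k : ℕ) (c : ℤ) (e : Bool) (δ : Fin k → Bool) (j : ℕ) :
    spath (k + 1) c (Fin.cons e δ : Fin (k + 1) → Bool) (j + 1) = spath k (c + sg e) δ j := by
  simp only [spath, Finset.sum_range_succ', Nat.add_lt_add_iff_right, Nat.zero_lt_succ, dif_pos]
  rw [add_comm (∑ i ∈ range j, _), ← add_assoc]
  rfl

lemma spath_self (k : ℕ) (c : ℤ) (δ : Fin k → Bool) : spath k c δ k = c + ∑ j, sg (δ j) := by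
  rw [spath, Finset.sum_range]
  simp

lemma sum_prod_spath_eq_transferList (w : α → ℕ → ℤ → ℤ → R) (f : ℤ → R) {k : ℕ} (ε : Fin k → α)
    (c : ℤ) :
    ∑ δ : Fin k → Bool,
        (∏ j : Fin k, w (ε j) (j.rev : ℕ) (spath k c δ (j + 1)) (spath k c δ j))
          * f (spath k c δ k)
      = transferList w f (List.ofFn ε) c := by
  induction k generalizing c with
  | zero => simp [transferList, spath_zero]
  | succ k ih =>
    have hfirst (e : Bool) : ∑ δ : Fin k → Bool,
        (∏ j : Fin (k + 1), w (ε j) (j.rev : ℕ)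
            (spath (k + 1) c (Fin.cons e δ : Fin (k + 1) → Bool) (j + 1))
            (spath (k + 1) c (Fin.cons e δ : Fin (k + 1) → Bool) j))
          * f (spath (k + 1) c (Fin.cons e δ : Fin (k + 1) → Bool) (k + 1))
        = w (ε 0) k (c + sg e) c * transferList w f (List.ofFn (Fin.tail ε)) (c + sg e) := by
      simp only [Fin.prod_univ_succ, Fin.val_zero, Fin.val_succ, spath_cons_succ, spath_zero,
        Fin.rev_zero, Fin.val_last, Fin.rev_succ, Fin.val_castSucc, mul_assoc, ← mul_sum]
      rw [← ih]
      rfl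
    rw [← (Fin.consEquiv fun _ : Fin (k + 1) ↦ Bool).sum_comp, Fintype.sum_prod_type,
      Fintype.sum_bool, List.ofFn_succ, transferList, transfer, List.length_ofFn]
    exact congrArg₂ (· + ·) (hfirst true) (hfirst false)

end TransferOperators

section SignSequences

variable {k : ℕ}

lemma sum_sg_eq_two_mul_count_sub (ε : Fin k → Bool) :
    ∑ j, sg (ε j) = 2 * (List.ofFn ε).count true - k := by
  induction k with
  | zero => simp
  | succ k ih =>
    rw [Fin.sum_univ_succ, List.ofFn_succ, List.count_cons, ih]
    cases ε 0 <;> simp [sg] <;> ring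

lemma ofFn_perm_of_sum_sg_eq {ε ε' : Fin k → Bool} (h : ∑ j, sg (ε j) = ∑ j, sg (ε' j)) :
    (List.ofFn ε).Perm (List.ofFn ε') := by
  rw [sum_sg_eq_two_mul_count_sub, sum_sg_eq_two_mul_count_sub] at h
  have hlen := List.count_true_add_count_false (List.ofFn ε)
  have hlen' := List.count_true_add_count_false (List.ofFn ε')
  rw [List.length_ofFn] at hlen hlen'
  rw [List.perm_iff_count]
  rintro (_ | _) <;> lia

/-- The sign sequence that starts with `(k + μ) / 2` plus signs and continues with minus signs. -/
def plusFirst (k : ℕ) (μ : ℤ) (j : Fin k) : Bool := decide ((j + 1 : ℤ) ≤ (k + μ) / 2)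

lemma sg_plusFirst (μ : ℤ) (j : Fin k) :
    sg (plusFirst k μ j) = if (j + 1 : ℤ) ≤ (k + μ) / 2 then 1 else -1 := by
  simp [sg, plusFirst]

lemma sum_sg_plusFirst {t : ℕ} (ht : t ≤ k) :
    ∑ j, sg (plusFirst k (2 * t - k) j) = 2 * t - k := by
  have hsg (j : Fin k) :
      sg (plusFirst k (2 * t - k) j) = 2 * (if (j : ℕ) < t then 1 else 0) - 1 := by
    rw [sg_plusFirst]
    split_ifs <;> omega
  rw [sum_congr rfl fun j _ ↦ hsg j, sum_sub_distrib, ← mul_sum, sum_boole,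
    Fin.card_filter_val_lt]
  simp [ht]

lemma sum_sg_plusFirst_sum_sg (ε : Fin k → Bool) :
    ∑ j, sg (plusFirst k (∑ i, sg (ε i)) j) = ∑ j, sg (ε j) := by
  rw [sum_sg_eq_two_mul_count_sub ε]
  exact sum_sg_plusFirst (by simpa using List.count_le_length (a := true) (l := List.ofFn ε))

lemma sum_sum_sg_fiberwise {M : Type*} [AddCommMonoid M] (F : (Fin k → Bool) → M) :
    ∑ i ∈ range (k + 1), ∑ ε with ∑ j, sg (ε j) = (k : ℤ) - 2 * i, F ε = ∑ ε, F ε := by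
  rw [← sum_fiberwise_of_maps_to (t := range (k + 1)) (g := fun ε ↦ (List.ofFn ε).count false)]
  · refine sum_congr rfl fun i _ ↦ sum_congr (filter_congr fun ε _ ↦ ?_) fun _ _ ↦ rfl
    have hlen := List.count_true_add_count_false (List.ofFn ε)
    rw [List.length_ofFn] at hlen
    rw [sum_sg_eq_two_mul_count_sub]
    lia
  · intro ε _
    simpa [Nat.lt_succ_iff] using List.count_le_length (a := false) (l := List.ofFn ε)

lemma prod_sum_sign_mul {R : Type*} [CommSemiring R] (F G : Fin k → ℤ → R) :
    ∏ j, ∑ s ∈ ({1, -1} : Finset ℤ), F j s * G j s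
      = ∑ ε : Fin k → Bool, (∏ j, F j (sg (ε j))) * ∏ j, G j (sg (ε j)) := by
  have hsign (j : Fin k) :
      ∑ s ∈ ({1, -1} : Finset ℤ), F j s * G j s = ∑ e : Bool, F j (sg e) * G j (sg e) := by
    rw [sum_pair (by decide), Fintype.sum_bool]
    rfl
  simp only [hsign, Fintype.prod_sum, prod_mul_distrib]

end SignSequences

section Fusion

variable {τ : ℂ} {r : ℝ} {k : ℕ}

lemma transfer_psiStar_comm (hτ : 0 < τ.im) (hr : r ≠ 0) (v : ℂ) (e e' : Bool)
    (f : ℤ → ℂ) {c : ℤ} (hup : br τ r (c + 1 : ℤ) ≠ 0) (hdown : br τ r (c - 1 : ℤ) ≠ 0) :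
    transfer (psiStar τ r (v + 1) (sg e)) (transfer (psiStar τ r v (sg e')) f) c
      = transfer (psiStar τ r (v + 1) (sg e')) (transfer (psiStar τ r v (sg e)) f) c := by
  have hupup := psiStar_mul_psiStar_straight (τ := τ) (r := r) v (sg e) (sg e') 1 c
  have hdowndown := psiStar_mul_psiStar_straight (τ := τ) (r := r) v (sg e) (sg e') (-1) c
  have hturn := psiStar_exchange_turn hτ hr v e e' hup hdown
  simp only [← sub_eq_add_neg] at hdowndown
  simp only [transfer, add_sub_cancel_right, sub_add_cancel]
  linear_combination f (c + 1 + 1) * hupup + f (c - 1 - 1) * hdowndown + f c * hturn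

/-- The sum over all `k`-step paths from `c` to `d` of the products of dual intertwining vectors
with sign sequence `ε`; `psiStarF` is its value at one particular `ε`. -/
def dualPathSum (τ : ℂ) (r : ℝ) (u : ℂ) (ε : Fin k → Bool) (c d : ℤ) : ℂ :=
  ∑ δ : Fin k → Bool with ∑ j, sg (δ j) = d - c,
    ∏ j : Fin k, psiStar τ r (u + k - ((j + 1 : ℕ) : ℂ)) (sg (ε j))
      (spath k c δ (j + 1)) (spath k c δ j)

/-- The product of intertwining vectors with sign sequence `ε` along the canonical path from `a`
to `b`. -/
def canonicalPathProd (τ : ℂ) (r : ℝ) (u : ℂ) (ε : Fin k → Bool) (a b : ℤ) : ℂ :=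
  ∏ j : Fin k, psi τ r (u + k - ((j + 1 : ℕ) : ℂ)) (sg (ε j))
    (cpathZ a ((k - (a - b)) / 2) j) (cpathZ a ((k - (a - b)) / 2) (j + 1))

lemma dualPathSum_eq_transferList (u : ℂ) (ε : Fin k → Bool) (c d : ℤ) :
    dualPathSum τ r u ε c d
      = transferList (fun e n ↦ psiStar τ r (u + n) (sg e)) (Pi.single d 1) (List.ofFn ε) c := by
  rw [← sum_prod_spath_eq_transferList, dualPathSum, sum_filter]
  refine sum_congr rfl fun δ _ ↦ ?_
  have hshift (j : Fin k) : u + k - ((j + 1 : ℕ) : ℂ) = u + (j.rev : ℕ) := by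
    rw [Fin.val_rev, Nat.cast_sub (by lia)]
    ring
  simp only [hshift, spath_self, Pi.single_apply, mul_ite, mul_one, mul_zero]
  exact if_congr (by lia) rfl rfl

lemma dualPathSum_eq_of_sum_sg_eq (hτ : 0 < τ.im) (hr : r ≠ 0) (u : ℂ) {ε ε' : Fin k → Bool}
    (h : ∑ j, sg (ε j) = ∑ j, sg (ε' j)) {c : ℤ} (hc : ∀ s : ℤ, |s - c| < k → br τ r s ≠ 0)
    (d : ℤ) : dualPathSum τ r u ε c d = dualPathSum τ r u ε' c d := by
  rw [dualPathSum_eq_transferList, dualPathSum_eq_transferList]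
  refine transferList_perm (P := fun s ↦ br τ r s ≠ 0) (fun e e' n f c hup hdown ↦ ?_) _
    (ofFn_perm_of_sum_sg_eq h) (by simpa using hc)
  push_cast
  rw [← add_assoc]
  exact transfer_psiStar_comm hτ hr _ e e' f hup hdown

lemma psiStarF_eq_dualPathSum (hτ : 0 < τ.im) (hr : r ≠ 0) (u : ℂ) (ε : Fin k → Bool) {c d : ℤ}
    (hcd : adm k c d) (hc : ∀ s : ℤ, |s - c| < k → br τ r s ≠ 0) :
    psiStarF τ r k (∑ j, sg (ε j)) u d c = dualPathSum τ r u ε c d := by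
  rw [psiStarF, if_pos hcd, ← dualPathSum_eq_of_sum_sg_eq hτ hr u (sum_sg_plusFirst_sum_sg ε) hc d]
  simp only [dualPathSum, sg_plusFirst]

lemma psiF_eq_sum_canonicalPathProd (μ : ℤ) (u : ℂ) {a b : ℤ} (hab : adm k a b) :
    psiF τ r k μ u a b
      = ∑ ε : Fin k → Bool with ∑ j, sg (ε j) = μ, canonicalPathProd τ r u ε a b :=
  if_pos hab

lemma Lk_eq_sum_dualPathSum_mul (hτ : 0 < τ.im) (hr : r ≠ 0) (u : ℂ) {a b c d : ℤ}
    (hab : adm k a b) (hcd : adm k c d) (hc : ∀ s : ℤ, |s - c| < k → br τ r s ≠ 0) :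
    Lk τ r k u a b c d
      = ∑ ε : Fin k → Bool, dualPathSum τ r u ε c d * canonicalPathProd τ r u ε a b := by
  rw [Lk, ← sum_sum_sg_fiberwise]
  refine sum_congr rfl fun i _ ↦ ?_
  rw [psiF_eq_sum_canonicalPathProd _ u hab, mul_sum]
  refine sum_congr rfl fun ε hε ↦ ?_
  rw [← (mem_filter.1 hε).2, psiStarF_eq_dualPathSum hτ hr u ε hcd hc]

lemma adm_of_sub_eq {n : ℕ} {a b : ℤ} (hn : n ≤ k) (hab : a - b = k - 2 * n) : adm k a b := by
  constructor <;> lia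

end Fusion

theorem L_fusion_general {τ : ℂ} {r : ℝ} (hτ : 0 < τ.im) (hr : r ≠ 0) {k : ℕ} {a b c d : ℤ}
    (hab : adm k a b) (hcd : adm k c d) {u : ℂ} (hc : ∀ s : ℤ, |s - c| < k → br τ r s ≠ 0)
    (_hu : ∀ j < k, br τ r (u + j) ≠ 0) :
    Lk τ r k u a b c d =
      ∑ δ : Fin k → Bool with ∑ j, sg (δ j) = d - c,
        ∏ j : Fin k, ∑ ε ∈ ({1, -1} : Finset ℤ),
          psiStar τ r (u + k - ((j + 1 : ℕ) : ℂ)) ε (spath k c δ (j + 1)) (spath k c δ j) *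
            psi τ r (u + k - ((j + 1 : ℕ) : ℂ)) ε
              (cpathZ a ((k - (a - b)) / 2) j) (cpathZ a ((k - (a - b)) / 2) (j + 1)) := by
  rw [Lk_eq_sum_dualPathSum_mul hτ hr u hab hcd hc]
  simp only [prod_sum_sign_mul, dualPathSum, canonicalPathProd, sum_mul]
  exact sum_comm

/-- Fusion (combinatorial) formula for the L-matrix. -/
theorem L_fusion (τ : ℂ) (r : ℝ) (hτ : 0 < τ.im) (hr : 0 < r) (hirr : Irrational r)
    (k n m : ℕ) (hk : 1 ≤ k) (hn : n ≤ k) (hm : m ≤ k)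
    (a b c d : ℤ) (hab : a - b = (k : ℤ) - 2 * n) (hcd : c - d = (k : ℤ) - 2 * m)
    (hmin : (k : ℤ) < min c d) (u : ℂ)
    (hc : ∀ s : ℤ, |s - c| ≤ (k : ℤ) → br τ r (s : ℂ) ≠ 0)
    (hu : ∀ j : ℕ, j < k → br τ r (u + (j : ℂ)) ≠ 0) :
    Lk τ r k u a b c d =
      ∑ δ ∈ Finset.univ.filter fun δ : Fin k → Bool => (∑ j, sg (δ j)) = d - c,
        ∏ j : Fin k,
          ∑ ε ∈ ({1, -1} : Finset ℤ),
            psiStar τ r (u + (k : ℂ) - (((j : ℕ) + 1 : ℕ) : ℂ)) ε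
                (spath k c δ ((j : ℕ) + 1)) (spath k c δ (j : ℕ)) *
              psi τ r (u + (k : ℂ) - (((j : ℕ) + 1 : ℕ) : ℂ)) ε
                (cpathZ a (((k : ℤ) - (a - b)) / 2) (j : ℕ))
                (cpathZ a (((k : ℤ) - (a - b)) / 2) ((j : ℕ) + 1)) :=
  L_fusion_general hτ hr.ne' (adm_of_sub_eq hn hab) (adm_of_sub_eq hm hcd)
    (fun s hs ↦ hc s hs.le) hu

end Ell
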